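/- For every φ = (α, y) ∈ 𝓑 and every t ∈ ℝ, the function i_φ is differentiable at t and i'_φ(t) = (1/(16π)) ∫_{ℝ³} { ∂v(t)·∂α + (∂Y(t)·∂y − α |∂Y(t)|²) X(t)⁻² } dμ. -/

import Mathlib

open Real MeasureTheory

noncomputable section

/-- Partial derivative with respect to ρ (the first coordinate) of an
axisymmetric function, viewed as a function of (ρ, z). -/
def pdR (f : ℝ × ℝ → ℝ) (p : ℝ × ℝ) : ℝ := fderiv ℝ f p (1, 0)

/-- Partial derivative with respect to z (the second coordinate). -/
def pdZ (f : ℝ × ℝ → ℝ) (p : ℝ × ℝ) : ℝ := fderiv ℝ f p (0, 1)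

/-- |∂f|² = f_{,ρ}² + f_{,z}². -/
def gradSq (f : ℝ × ℝ → ℝ) (p : ℝ × ℝ) : ℝ := (pdR f p) ^ 2 + (pdZ f p) ^ 2

/-- ∂f·∂g = f_{,ρ} g_{,ρ} + f_{,z} g_{,z}. -/
def gradDot (f g : ℝ × ℝ → ℝ) (p : ℝ × ℝ) : ℝ :=
  pdR f p * pdR g p + pdZ f p * pdZ g p

/-- The flat Laplacian of ℝ³ acting on axisymmetric functions:
Δf = f_{,ρρ} + ρ⁻¹ f_{,ρ} + f_{,zz}. -/
def lap (f : ℝ × ℝ → ℝ) (p : ℝ × ℝ) : ℝ :=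
  pdR (pdR f) p + (p.1)⁻¹ * pdR f p + pdZ (pdZ f) p

/-- The flat divergence of ℝ³ of an axisymmetric vector field (Wρ, Wz):
div W = ρ⁻¹ (ρ Wρ)_{,ρ} + Wz_{,z} = Wρ_{,ρ} + ρ⁻¹ Wρ + Wz_{,z}. -/
def divg (Wr Wz : ℝ × ℝ → ℝ) (p : ℝ × ℝ) : ℝ :=
  pdR Wr p + (p.1)⁻¹ * Wr p + pdZ Wz p

/-- The half-plane {ρ > 0} of (ρ, z), representing ℝ³ in cylindrical coordinates. -/
def HP : Set (ℝ × ℝ) := {p | 0 < p.1}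

/-- Ω_{ρ₀} = {ρ > ρ₀}, the exterior of the solid cylinder of radius ρ₀. -/
def Om (ρ₀ : ℝ) : Set (ℝ × ℝ) := {p | ρ₀ < p.1}

/-- ∫_{ℝ³} h dμ for an axisymmetric integrand h, where dμ = ρ dρ dz dφ. -/
def intR3 (h : ℝ × ℝ → ℝ) : ℝ := (2 * π) * ∫ p in HP, h p * p.1

/-- ∫_{Ω_{ρ₀}} h dμ for an axisymmetric integrand h. -/
def intOm (ρ₀ : ℝ) (h : ℝ × ℝ → ℝ) : ℝ := (2 * π) * ∫ p in Om ρ₀, h p * p.1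

/-- The mass functional M(v, Y) = (1/(32π)) ∫_{ℝ³} (|∂v|² + ρ⁻⁴ e^{−2v} |∂Y|²) dμ. -/
def MF (v Y : ℝ × ℝ → ℝ) : ℝ :=
  (1 / (32 * π)) *
    intR3 (fun p => gradSq v p + (p.1 ^ 4)⁻¹ * Real.exp (-2 * v p) * gradSq Y p)

/-- r = √(ρ² + z²). -/
def rr (p : ℝ × ℝ) : ℝ := Real.sqrt (p.1 ^ 2 + p.2 ^ 2)

/-- cos θ = z / r. -/
def cosT (p : ℝ × ℝ) : ℝ := p.2 / rr p

/-- sin²θ = ρ² / r². -/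
def sin2T (p : ℝ × ℝ) : ℝ := p.1 ^ 2 / (rr p) ^ 2

/-- r̃ = r + √|J|. -/
def rt (J : ℝ) (p : ℝ × ℝ) : ℝ := rr p + Real.sqrt |J|

/-- Σ = r̃² + |J| cos²θ. -/
def Sg (J : ℝ) (p : ℝ × ℝ) : ℝ := (rt J p) ^ 2 + |J| * (cosT p) ^ 2

/-- The extreme Kerr potential Y₀. -/
def Y0 (J : ℝ) (p : ℝ × ℝ) : ℝ :=
  2 * J * ((cosT p) ^ 3 - 3 * cosT p) - 2 * J ^ 2 * cosT p * (sin2T p) ^ 2 / Sg J p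

/-- The extreme Kerr Killing norm X₀. -/
def X0 (J : ℝ) (p : ℝ × ℝ) : ℝ :=
  (((rt J p) ^ 2 + |J|) ^ 2 - (rr p) ^ 2 * |J| * sin2T p) * sin2T p / Sg J p

/-- The extreme Kerr function v₀ = ln X₀ − 2 ln ρ, so that X₀ = ρ² e^{v₀}. -/
def v0 (J : ℝ) (p : ℝ × ℝ) : ℝ := Real.log (X0 J p) - 2 * Real.log p.1

/-- σ = √(r² + 1). -/
def sgm (p : ℝ × ℝ) : ℝ := Real.sqrt ((rr p) ^ 2 + 1)

/-- The pointwise weighted C¹ quantity σ^{−β}|f| + σ^{−β+1}|∂f|. -/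
def wFn (β : ℝ) (f : ℝ × ℝ → ℝ) (p : ℝ × ℝ) : ℝ :=
  sgm p ^ (-β) * |f p| + sgm p ^ (-β + 1) * Real.sqrt (gradSq f p)

/-- The weighted norm ‖f‖_{C¹_β(Ω)} = sup_Ω (σ^{−β}|f| + σ^{−β+1}|∂f|). -/
def C1norm (β : ℝ) (Ω : Set (ℝ × ℝ)) (f : ℝ × ℝ → ℝ) : ℝ :=
  sSup (wFn β f '' Ω)

/-- The Banach space 𝓑: pairs φ = (α, y) of axisymmetric C¹ functions with
y ≡ 0 on {ρ ≤ ρ₀} and finite norm ‖φ‖_𝓑 = ‖α‖_{C¹_β(ℝ³)} + ‖y‖_{C¹_β(Ω_{ρ₀})}. -/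
structure Bsp (ρ₀ β : ℝ) where
  a : ℝ × ℝ → ℝ
  y : ℝ × ℝ → ℝ
  ha : ContDiff ℝ 1 a
  hy : ContDiff ℝ 1 y
  hy0 : ∀ p : ℝ × ℝ, p.1 ≤ ρ₀ → y p = 0
  hba : BddAbove (wFn β a '' HP)
  hby : BddAbove (wFn β y '' Om ρ₀)

/-- The norm of 𝓑. -/
def Bnorm (ρ₀ β : ℝ) (φ : Bsp ρ₀ β) : ℝ :=
  C1norm β HP φ.a + C1norm β (Om ρ₀) φ.y

/-- i_φ(t) = M(u₀ + tφ) = M(v₀ + tα, Y₀ + ty). -/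
def iF (J ρ₀ β : ℝ) (φ : Bsp ρ₀ β) (t : ℝ) : ℝ :=
  MF (fun p => v0 J p + t * φ.a p) (fun p => Y0 J p + t * φ.y p)

/-- ‖α‖²_{H₁} = ∫_{ℝ³} |∂α|² dμ + ∫_{ℝ³} α² r⁻² dμ. -/
def H1sq (a : ℝ × ℝ → ℝ) : ℝ :=
  intR3 (fun p => gradSq a p) + intR3 (fun p => (a p) ^ 2 * ((rr p) ^ 2)⁻¹)

/-- ‖y‖²_{H₂} = ∫_{Ω_{ρ₀}} |∂y|² ρ⁻⁴ dμ + ∫_{Ω_{ρ₀}} y² ρ⁻⁶ dμ. -/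
def H2sq (ρ₀ : ℝ) (y : ℝ × ℝ → ℝ) : ℝ :=
  intOm ρ₀ (fun p => gradSq y p * (p.1 ^ 4)⁻¹) +
    intOm ρ₀ (fun p => (y p) ^ 2 * (p.1 ^ 6)⁻¹)

/-- ‖φ‖²_𝓗 = ‖α‖²_{H₁} + ‖y‖²_{H₂}. -/
def Hsq (ρ₀ β : ℝ) (φ : Bsp ρ₀ β) : ℝ := H1sq φ.a + H2sq ρ₀ φ.y

/-!
On `ρ > 0` the integrand of `i_φ(s)` is, with `W = ρ` and `V = ρ · ρ⁻⁴ e^{-2v₀}`,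
`W |∂v₀ + s ∂α|² + V e^{-2sα} |∂Y₀ + s ∂y|²`, and its `s`-derivative is twice the integrand of the
claimed formula. As `α` is bounded, `hasDerivAt_energy` dominates this derivative for `|s - t| < 1`
by a combination of the four functions `W |∂v₀|²`, `W |∂α|²`, `V |∂Y₀|²`, `V |∂y|²`, so the theorem
reduces to their integrability.

For the directions this is the decay rate `β < -1/2` (`integrable_rho_gradSq`); for `y` one also uses
that `∂y` vanishes for `ρ ≤ ρ₀` and that `v₀ ≥ 0` (`integrable_weight_gradSq_y`).

For extreme Kerr, put `m = √|J|`. On `ρ > 0` one has `v₀ = log (Q + D) - log Q`, where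
`Q = (r + m)² r² + m² z²` and `D = 2m r³ + 6m² r² + 8m³ r + 4m⁴` depends on `r` only and has positive
coefficients. This gives `v₀ ≥ 0` and the bound `|∂v₀| ≤ C / (r (r + m))` (`v0_bound`).
The derivative of `Y₀` carries a factor `sin²θ` that cancels the one in `X₀`, so that
`|∂Y₀| / X₀ ≤ C / (r (r + m))` as well (`Y0_bound'`); here `V = ρ X₀⁻²`. Both densities are thus at
most a multiple of `1 / (r (r + m)²)`, which is integrable in polar coordinates
(`integrable_polar_kernel`).
-/

/-! ### Two integrable majorants -/

/-- In polar coordinates of the half-plane variables, `1 / (r (r + m)²)` becomes `(r + m)⁻²`. This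
kernel majorizes both energy densities of extreme Kerr. -/
lemma integrable_polar_kernel {m : ℝ} (hm : 0 < m) :
    Integrable (fun p : ℝ × ℝ => (rr p * (rr p + m) ^ 2)⁻¹) := by
  have hmeas : Measurable (fun p : ℝ × ℝ => (rr p * (rr p + m) ^ 2)⁻¹) := by
    unfold rr; fun_prop
  have hrr : ∀ p : ℝ × ℝ, 0 ≤ rr p := fun p => Real.sqrt_nonneg _
  refine ⟨hmeas.aestronglyMeasurable, ?_⟩
  rw [hasFiniteIntegral_iff_ofReal (ae_of_all _ fun p => by have := hrr p; positivity),
    ← lintegral_comp_polarCoord_symm]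
  have hg : IntegrableOn (fun q : ℝ × ℝ => (q.1 + m) ^ (-2 : ℝ) * 1) polarCoord.target := by
    rw [IntegrableOn, polarCoord_target, Measure.volume_eq_prod, ← Measure.prod_restrict]
    refine Integrable.mul_prod (f := fun x : ℝ => (x + m) ^ (-2 : ℝ)) (g := fun _ : ℝ => (1 : ℝ)) ?_ ?_
    · exact integrableOn_add_rpow_Ioi_of_lt (by norm_num) (by linarith)
    · exact integrableOn_const (by simp)
  refine lt_of_le_of_lt (lintegral_mono_ae ?_) hg.lintegral_lt_top
  refine (ae_restrict_iff' polarCoord.open_target.measurableSet).2 (ae_of_all _ fun q hq => ?_)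
  have hq1 : 0 < q.1 := hq.1
  have hr : rr (polarCoord.symm q) = q.1 := by
    rw [polarCoord_symm_apply, rr]
    rw [show (q.1 * Real.cos q.2) ^ 2 + (q.1 * Real.sin q.2) ^ 2
      = q.1 ^ 2 * (Real.cos q.2 ^ 2 + Real.sin q.2 ^ 2) by ring, Real.cos_sq_add_sin_sq, mul_one,
      Real.sqrt_sq hq1.le]
  rw [hr, smul_eq_mul, ← ENNReal.ofReal_mul hq1.le]
  apply ENNReal.ofReal_le_ofReal
  have hqm : 0 < q.1 + m := by linarith
  rw [Real.rpow_neg hqm.le, Real.rpow_two, mul_one, mul_inv, ← mul_assoc,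
    mul_inv_cancel₀ hq1.ne', one_mul]

/-- A finite weighted `C¹` norm gives `ρ |∂f|² ≤ C² σ^{2β - 1}`, which is integrable over the
plane exactly because `2β - 1 < -2`. -/
lemma integrable_rho_gradSq {β : ℝ} (hβ : β < -(1 / 2)) {f : ℝ × ℝ → ℝ} {C : ℝ}
    (hf : ∀ p ∈ HP, wFn β f p ≤ C) :
    IntegrableOn (fun p => p.1 * gradSq f p) HP := by
  have hmR : Measurable (pdR f) := measurable_fderiv_apply_const ℝ f _
  have hmZ : Measurable (pdZ f) := measurable_fderiv_apply_const ℝ f _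
  have hK : Integrable (fun p : ℝ × ℝ => (1 + ‖p‖) ^ (-(1 - 2 * β))) := by
    apply integrable_one_add_norm
    simp; linarith
  have hS : MeasurableSet HP := measurableSet_lt measurable_const measurable_fst
  refine (hK.integrableOn.const_mul (C ^ 2 * 2 ^ (1 - 2 * β))).mono' ?_ ?_
  · apply Measurable.aestronglyMeasurable
    unfold gradSq
    fun_prop
  refine (ae_restrict_iff' hS).2 (ae_of_all _ fun p hp => ?_)
  have hp1 : 0 < p.1 := hp
  have hs1 : 1 ≤ sgm p := by
    rw [sgm]; apply Real.one_le_sqrt.2; nlinarith [sq_nonneg (rr p)]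
  have hs0 : 0 < sgm p := by linarith
  have hsq : sgm p ^ 2 = p.1 ^ 2 + p.2 ^ 2 + 1 := by
    rw [sgm, Real.sq_sqrt (by positivity), rr, Real.sq_sqrt (by positivity)]
  have hG : 0 ≤ gradSq f p := by unfold gradSq; positivity
  have h1 : sgm p ^ (-β + 1) * Real.sqrt (gradSq f p) ≤ C := by
    refine le_trans ?_ (hf p hp)
    unfold wFn
    have : 0 ≤ sgm p ^ (-β) * |f p| := by positivity
    linarith
  have h2 : Real.sqrt (gradSq f p) ≤ C * sgm p ^ (β - 1) := by
    have e : sgm p ^ (β - 1) * sgm p ^ (-β + 1) = 1 := by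
      rw [← Real.rpow_add hs0]; simp
    have := mul_le_mul_of_nonneg_left h1 (Real.rpow_nonneg hs0.le (β - 1))
    rw [← mul_assoc, e] at this
    linarith
  have h3 : gradSq f p ≤ C ^ 2 * sgm p ^ (2 * β - 2) := by
    have := pow_le_pow_left₀ (Real.sqrt_nonneg _) h2 2
    rw [Real.sq_sqrt hG, mul_pow, ← Real.rpow_natCast (sgm p ^ (β - 1)), ← Real.rpow_mul hs0.le,
      show (β - 1) * ((2 : ℕ) : ℝ) = 2 * β - 2 by push_cast; ring] at this
    exact this
  have hρ : p.1 ≤ sgm p := by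
    refine (abs_le_of_sq_le_sq' ?_ hs0.le).2
    nlinarith [sq_nonneg p.2]
  have hz : |p.2| ≤ sgm p := by
    apply abs_le_of_sq_le_sq _ hs0.le
    nlinarith [sq_nonneg p.1]
  have hn : 1 + ‖p‖ ≤ 2 * sgm p := by
    have : ‖p‖ ≤ sgm p := by
      rw [Prod.norm_def]
      refine max_le ?_ hz
      rw [Real.norm_eq_abs, abs_of_pos hp1]; exact hρ
    linarith
  have hn0 : 0 < 1 + ‖p‖ := by positivity
  rw [Real.norm_of_nonneg (by positivity)]
  calc p.1 * gradSq f p ≤ sgm p * (C ^ 2 * sgm p ^ (2 * β - 2)) := by gcongr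
    _ = C ^ 2 * sgm p ^ (-(1 - 2 * β)) := by
      rw [show -(1 - 2 * β) = 1 + (2 * β - 2) by ring, Real.rpow_add hs0, Real.rpow_one]; ring
    _ ≤ C ^ 2 * (2 ^ (1 - 2 * β) * (1 + ‖p‖) ^ (-(1 - 2 * β))) := by
      gcongr
      rw [Real.rpow_neg hs0.le, Real.rpow_neg hn0.le, ← div_eq_mul_inv,
        ← inv_div, ← Real.div_rpow hn0.le (by norm_num)]
      apply inv_anti₀ (by positivity)
      apply Real.rpow_le_rpow (by positivity) (by linarith) (by linarith)
    _ = _ := by ring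

/-! ### Differentiation under the integral sign -/

/-- Differentiation under the integral sign for an abstract energy with the algebraic structure of
the mass functional: finite energy of the base point and of the direction, together with a bound
on the direction `α`, dominate the derivative of the integrand uniformly for `|s - t| < 1`. -/
lemma hasDerivAt_energy {S : Type*} [MeasurableSpace S] {μ : Measure S}
    {a₀ a₁ b₀ b₁ c₀ c₁ d₀ d₁ α W V : S → ℝ} {A : ℝ}
    (ha₀ : Measurable a₀) (ha₁ : Measurable a₁) (hb₀ : Measurable b₀) (hb₁ : Measurable b₁)
    (hc₀ : Measurable c₀) (hc₁ : Measurable c₁) (hd₀ : Measurable d₀) (hd₁ : Measurable d₁)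
    (hα : Measurable α) (hW : Measurable W) (hV : Measurable V)
    (hA : ∀ᵐ p ∂μ, |α p| ≤ A) (hW0 : ∀ᵐ p ∂μ, 0 ≤ W p) (hV0 : ∀ᵐ p ∂μ, 0 ≤ V p)
    (hG₀ : Integrable (fun p => W p * (a₀ p ^ 2 + b₀ p ^ 2)) μ)
    (hG₁ : Integrable (fun p => W p * (a₁ p ^ 2 + b₁ p ^ 2)) μ)
    (hH₀ : Integrable (fun p => V p * (c₀ p ^ 2 + d₀ p ^ 2)) μ)
    (hH₁ : Integrable (fun p => V p * (c₁ p ^ 2 + d₁ p ^ 2)) μ) (t : ℝ) :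
    HasDerivAt (fun s => ∫ p, (W p * ((a₀ p + s * a₁ p) ^ 2 + (b₀ p + s * b₁ p) ^ 2) +
        V p * Real.exp (-2 * (s * α p)) *
          ((c₀ p + s * c₁ p) ^ 2 + (d₀ p + s * d₁ p) ^ 2)) ∂μ)
      (∫ p, (2 * (W p * ((a₀ p + t * a₁ p) * a₁ p + (b₀ p + t * b₁ p) * b₁ p)) +
        2 * (V p * Real.exp (-2 * (t * α p)) *
          (((c₀ p + t * c₁ p) * c₁ p + (d₀ p + t * d₁ p) * d₁ p) -
            α p * ((c₀ p + t * c₁ p) ^ 2 + (d₀ p + t * d₁ p) ^ 2)))) ∂μ) t := by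
  set T : ℝ := |t| + 1 with hT
  have hT0 : 0 ≤ T := by positivity
  set E : ℝ := Real.exp (2 * (T * A)) with hE
  -- elementary pointwise bounds, uniform for `|s| ≤ T`
  have hsq : ∀ s x y : ℝ, |s| ≤ T → (x + s * y) ^ 2 ≤ 2 * x ^ 2 + 2 * T ^ 2 * y ^ 2 := by
    intro s x y hs
    have : s ^ 2 ≤ T ^ 2 := sq_le_sq' (abs_le.1 hs).1 (abs_le.1 hs).2
    nlinarith [sq_nonneg (x - s * y), mul_le_mul_of_nonneg_right this (sq_nonneg y)]
  have hmul : ∀ s x y : ℝ, |s| ≤ T → |(x + s * y) * y| ≤ x ^ 2 + (1 + T ^ 2) * y ^ 2 := by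
    intro s x y hs
    have := hsq s x y hs
    rw [abs_le]
    constructor <;> nlinarith [sq_nonneg (x + s * y - y), sq_nonneg (x + s * y + y)]
  have hexp : ∀ s x : ℝ, |s| ≤ T → |x| ≤ A → Real.exp (-2 * (s * x)) ≤ E := by
    intro s x hs hx
    apply Real.exp_le_exp.2
    have h1 : |s * x| ≤ T * A := by
      rw [abs_mul]; exact mul_le_mul hs hx (abs_nonneg _) hT0
    have := (abs_le.1 h1).1
    linarith
  have hball : ∀ s ∈ Metric.ball t 1, |s| ≤ T := by
    intro s hs
    rw [Metric.mem_ball, Real.dist_eq] at hs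
    have := abs_sub_abs_le_abs_sub s t
    linarith
  refine (hasDerivAt_integral_of_dominated_loc_of_deriv_le
    (F := fun s p => W p * ((a₀ p + s * a₁ p) ^ 2 + (b₀ p + s * b₁ p) ^ 2) +
        V p * Real.exp (-2 * (s * α p)) *
          ((c₀ p + s * c₁ p) ^ 2 + (d₀ p + s * d₁ p) ^ 2))
    (F' := fun s p => 2 * (W p * ((a₀ p + s * a₁ p) * a₁ p + (b₀ p + s * b₁ p) * b₁ p)) +
        2 * (V p * Real.exp (-2 * (s * α p)) *
          (((c₀ p + s * c₁ p) * c₁ p + (d₀ p + s * d₁ p) * d₁ p) -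
            α p * ((c₀ p + s * c₁ p) ^ 2 + (d₀ p + s * d₁ p) ^ 2))))
    (bound := fun p =>
      2 * (W p * (a₀ p ^ 2 + b₀ p ^ 2) + (1 + T ^ 2) * (W p * (a₁ p ^ 2 + b₁ p ^ 2))) +
      2 * E * ((1 + 2 * A) * (V p * (c₀ p ^ 2 + d₀ p ^ 2)) +
        (1 + T ^ 2 + A * (2 * T ^ 2)) * (V p * (c₁ p ^ 2 + d₁ p ^ 2))))
    (Metric.ball_mem_nhds t one_pos) ?_ ?_ ?_ ?_ ?_ ?_).2
  · exact Filter.Eventually.of_forall fun s =>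
      Measurable.aestronglyMeasurable (by fun_prop)
  · refine Integrable.mono' (g := fun p =>
      (2 * (W p * (a₀ p ^ 2 + b₀ p ^ 2)) + 2 * T ^ 2 * (W p * (a₁ p ^ 2 + b₁ p ^ 2))) +
      E * (2 * (V p * (c₀ p ^ 2 + d₀ p ^ 2)) + 2 * T ^ 2 * (V p * (c₁ p ^ 2 + d₁ p ^ 2))))
      (((hG₀.const_mul _).add (hG₁.const_mul _)).add
        (((hH₀.const_mul _).add (hH₁.const_mul _)).const_mul _))
      (Measurable.aestronglyMeasurable (by fun_prop)) ?_
    filter_upwards [hA, hW0, hV0] with p hAp hWp hVp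
    have ht : |t| ≤ T := by linarith
    rw [Real.norm_of_nonneg (by positivity)]
    have e1 := add_le_add (hsq t (a₀ p) (a₁ p) ht) (hsq t (b₀ p) (b₁ p) ht)
    have e2 := add_le_add (hsq t (c₀ p) (c₁ p) ht) (hsq t (d₀ p) (d₁ p) ht)
    have e3 := hexp t (α p) ht hAp
    calc _ ≤ W p * (2 * a₀ p ^ 2 + 2 * T ^ 2 * a₁ p ^ 2 + (2 * b₀ p ^ 2 + 2 * T ^ 2 * b₁ p ^ 2)) +
        V p * E * (2 * c₀ p ^ 2 + 2 * T ^ 2 * c₁ p ^ 2 + (2 * d₀ p ^ 2 + 2 * T ^ 2 * d₁ p ^ 2)) := by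
          gcongr
      _ = _ := by ring
  · exact Measurable.aestronglyMeasurable (by fun_prop)
  · filter_upwards [hA, hW0, hV0] with p hAp hWp hVp s hs
    have hs := hball s hs
    have hA0 : 0 ≤ A := (abs_nonneg _).trans hAp
    have e1 := (abs_add_le _ _).trans
      (add_le_add (hmul s (a₀ p) (a₁ p) hs) (hmul s (b₀ p) (b₁ p) hs))
    have e2 := (abs_add_le _ _).trans
      (add_le_add (hmul s (c₀ p) (c₁ p) hs) (hmul s (d₀ p) (d₁ p) hs))
    have e3 := add_le_add (hsq s (c₀ p) (c₁ p) hs) (hsq s (d₀ p) (d₁ p) hs)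
    have e4 := hexp s (α p) hs hAp
    rw [Real.norm_eq_abs]
    refine (abs_add_le _ _).trans ?_
    rw [abs_mul, abs_mul, abs_mul, abs_mul, abs_mul, abs_of_nonneg hWp, abs_of_nonneg hVp,
      abs_two, Real.abs_exp]
    have e5 : |(c₀ p + s * c₁ p) * c₁ p + (d₀ p + s * d₁ p) * d₁ p -
            α p * ((c₀ p + s * c₁ p) ^ 2 + (d₀ p + s * d₁ p) ^ 2)| ≤
        (c₀ p ^ 2 + (1 + T ^ 2) * c₁ p ^ 2 + (d₀ p ^ 2 + (1 + T ^ 2) * d₁ p ^ 2)) +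
        A * (2 * c₀ p ^ 2 + 2 * T ^ 2 * c₁ p ^ 2 + (2 * d₀ p ^ 2 + 2 * T ^ 2 * d₁ p ^ 2)) := by
      refine (abs_sub _ _).trans (add_le_add e2 ?_)
      rw [abs_mul, abs_of_nonneg (a := _ ^ 2 + _ ^ 2) (by positivity)]
      gcongr
    calc _ ≤ 2 * (W p * (a₀ p ^ 2 + (1 + T ^ 2) * a₁ p ^ 2 +
            (b₀ p ^ 2 + (1 + T ^ 2) * b₁ p ^ 2))) +
          2 * (V p * E * ((c₀ p ^ 2 + (1 + T ^ 2) * c₁ p ^ 2 +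
            (d₀ p ^ 2 + (1 + T ^ 2) * d₁ p ^ 2)) +
        A * (2 * c₀ p ^ 2 + 2 * T ^ 2 * c₁ p ^ 2 + (2 * d₀ p ^ 2 + 2 * T ^ 2 * d₁ p ^ 2)))) := by
          gcongr
      _ = _ := by ring
  · exact ((hG₀.add (hG₁.const_mul _)).const_mul _).add
      (((hH₀.const_mul _).add (hH₁.const_mul _)).const_mul _)
  · refine Filter.Eventually.of_forall fun p s _ => ?_
    have hl : ∀ x y : ℝ, HasDerivAt (fun s : ℝ => x + s * y) y s := fun x y => by
      simpa using ((hasDerivAt_id s).mul_const y).const_add x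
    have hx : HasDerivAt (fun s : ℝ => Real.exp (-2 * (s * α p)))
        (Real.exp (-2 * (s * α p)) * (-2 * α p)) s := by
      have := (((hasDerivAt_id s).mul_const (α p)).const_mul (-2)).exp
      simpa using this
    have := (((((hl (a₀ p) (a₁ p)).pow 2).add ((hl (b₀ p) (b₁ p)).pow 2)).const_mul (W p))).add
      ((hx.const_mul (V p)).mul (((hl (c₀ p) (c₁ p)).pow 2).add ((hl (d₀ p) (d₁ p)).pow 2)))
    refine this.congr_deriv ?_
    simp only [Pi.add_apply, Pi.pow_apply]
    push_cast
    ring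

/-! ### Pointwise bounds for extreme Kerr -/

/-- The function `Σ r²`, a polynomial in `r` and `z`, where `m = √|J|`. -/
def kerrQ (m : ℝ) (p : ℝ × ℝ) : ℝ := (rr p + m) ^ 2 * rr p ^ 2 + m ^ 2 * p.2 ^ 2

/-- The radial polynomial `D` for which `e^{v₀} = (kerrQ + D) / kerrQ`. -/
def kerrD (m : ℝ) (p : ℝ × ℝ) : ℝ :=
  2 * m * rr p ^ 3 + 6 * m ^ 2 * rr p ^ 2 + 8 * m ^ 3 * rr p + 4 * m ^ 4

lemma rr_sq (p : ℝ × ℝ) : rr p ^ 2 = p.1 ^ 2 + p.2 ^ 2 := by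
  rw [rr, Real.sq_sqrt (by positivity)]

lemma rr_pos {p : ℝ × ℝ} (hp : p ∈ HP) : 0 < rr p := by
  have hp1 : 0 < p.1 := hp
  exact Real.sqrt_pos.2 (by positivity)

lemma fst_le_rr (p : ℝ × ℝ) : p.1 ≤ rr p :=
  Real.le_sqrt_of_sq_le (by nlinarith [sq_nonneg p.2])

lemma isOpen_HP : IsOpen HP := isOpen_lt continuous_const continuous_fst

lemma measurableSet_HP : MeasurableSet HP := isOpen_HP.measurableSet

lemma kerrQ_pos {m : ℝ} (hm : 0 < m) {p : ℝ × ℝ} (hp : p ∈ HP) : 0 < kerrQ m p := by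
  have := rr_pos hp
  unfold kerrQ; positivity

lemma kerrD_pos {m : ℝ} (hm : 0 < m) {p : ℝ × ℝ} (hp : p ∈ HP) : 0 < kerrD m p := by
  have := rr_pos hp
  unfold kerrD; positivity

lemma X0_eq {J : ℝ} (hJ : J ≠ 0) {p : ℝ × ℝ} (hp : p ∈ HP) :
    X0 J p = p.1 ^ 2 * ((kerrQ √|J| p + kerrD √|J| p) / kerrQ √|J| p) := by
  have hm : 0 < √|J| := Real.sqrt_pos.2 (abs_pos.2 hJ)
  have hJm : |J| = √|J| ^ 2 := (Real.sq_sqrt (abs_nonneg J)).symm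
  have hr := rr_pos hp
  have hQ := kerrQ_pos hm hp
  have hS : Sg J p = kerrQ √|J| p / rr p ^ 2 := by
    unfold Sg rt cosT kerrQ
    nth_rewrite 2 [hJm]
    field_simp
  have hN : ((rt J p) ^ 2 + |J|) ^ 2 - (rr p) ^ 2 * |J| * sin2T p =
      kerrQ √|J| p + kerrD √|J| p := by
    have h1 : rr p ^ 2 * |J| * sin2T p = √|J| ^ 2 * p.1 ^ 2 := by
      unfold sin2T
      nth_rewrite 1 [hJm]
      field_simp
    rw [h1]
    unfold rt kerrQ kerrD
    nth_rewrite 2 [hJm]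
    have h2 := rr_sq p
    rw [show p.1 ^ 2 = rr p ^ 2 - p.2 ^ 2 by linarith]
    ring
  rw [X0, hS, hN, sin2T]
  field_simp

lemma X0_pos {J : ℝ} (hJ : J ≠ 0) {p : ℝ × ℝ} (hp : p ∈ HP) : 0 < X0 J p := by
  have hm : 0 < √|J| := Real.sqrt_pos.2 (abs_pos.2 hJ)
  have hQ := kerrQ_pos hm hp
  have hD := kerrD_pos hm hp
  have hp1 : 0 < p.1 := hp
  rw [X0_eq hJ hp]; positivity

lemma v0_eq {J : ℝ} (hJ : J ≠ 0) {p : ℝ × ℝ} (hp : p ∈ HP) :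
    v0 J p = Real.log (kerrQ √|J| p + kerrD √|J| p) - Real.log (kerrQ √|J| p) := by
  have hm : 0 < √|J| := Real.sqrt_pos.2 (abs_pos.2 hJ)
  have hQ := kerrQ_pos hm hp
  have hD := kerrD_pos hm hp
  have hp1 : 0 < p.1 := hp
  rw [v0, X0_eq hJ hp, Real.log_mul (by positivity) (by positivity),
    Real.log_div (by positivity) (by positivity), Real.log_pow]
  push_cast; ring

/-- Nonnegativity of `v₀` bounds the weight `ρ⁻⁴ e^{-2v₀}` away from the axis. -/
lemma v0_nonneg {J : ℝ} (hJ : J ≠ 0) {p : ℝ × ℝ} (hp : p ∈ HP) : 0 ≤ v0 J p := by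
  have hm : 0 < √|J| := Real.sqrt_pos.2 (abs_pos.2 hJ)
  have hQ := kerrQ_pos hm hp
  have hD := kerrD_pos hm hp
  rw [v0_eq hJ hp, sub_nonneg]
  exact Real.log_le_log hQ (by linarith)

lemma exp_v0 {J : ℝ} (hJ : J ≠ 0) {p : ℝ × ℝ} (hp : p ∈ HP) :
    p.1 ^ 2 * Real.exp (v0 J p) = X0 J p := by
  have hp1 : 0 < p.1 := hp
  have h2 : 2 * Real.log p.1 = Real.log (p.1 ^ 2) := by rw [Real.log_pow]; norm_num
  rw [v0, Real.exp_sub, Real.exp_log (X0_pos hJ hp), h2, Real.exp_log (by positivity)]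
  field_simp

/-- The derivative along a line determines `fderiv` in that direction. -/
lemma fderiv_eq_of_line {f g : ℝ × ℝ → ℝ} {p e : ℝ × ℝ} {d : ℝ} (hfg : f =ᶠ[nhds p] g)
    (hg : DifferentiableAt ℝ g p) (hd : HasDerivAt (fun τ : ℝ => g (p + τ • e)) d 0) :
    fderiv ℝ f p e = d := by
  rw [hfg.fderiv_eq]
  have hline : HasDerivAt (fun τ : ℝ => p + τ • e) e 0 := by
    simpa using ((hasDerivAt_id (0 : ℝ)).smul_const e).const_add p
  have hg' : HasFDerivAt g (fderiv ℝ g p) (p + (0 : ℝ) • e) := by simpa using hg.hasFDerivAt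
  exact (hg'.comp_hasDerivAt 0 hline).unique hd

lemma differentiableAt_rr {p : ℝ × ℝ} (hp : p ∈ HP) : DifferentiableAt ℝ rr p := by
  have hp1 : 0 < p.1 := hp
  have : p.1 ^ 2 + p.2 ^ 2 ≠ 0 := by positivity
  unfold rr
  fun_prop (disch := assumption)

lemma hasDerivAt_rr_line {p e : ℝ × ℝ} (hp : p ∈ HP) :
    HasDerivAt (fun τ : ℝ => rr (p + τ • e)) ((p.1 * e.1 + p.2 * e.2) / rr p) 0 := by
  have hp1 : 0 < p.1 := hp
  have h1 : HasDerivAt (fun τ : ℝ => (p.1 + τ * e.1)) e.1 0 := by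
    simpa using ((hasDerivAt_id (0 : ℝ)).mul_const e.1).const_add p.1
  have h2 : HasDerivAt (fun τ : ℝ => (p.2 + τ * e.2)) e.2 0 := by
    simpa using ((hasDerivAt_id (0 : ℝ)).mul_const e.2).const_add p.2
  have h3 := ((h1.pow 2).add (h2.pow 2)).sqrt (by simp; positivity)
  refine h3.congr_deriv ?_
  simp only [Pi.add_apply, Pi.pow_apply, zero_mul, add_zero, rr]
  push_cast
  field_simp

/-- Bounds on the directional derivatives of `r` and `cos θ` in a unit direction `e`. -/
lemma line_bounds {p e : ℝ × ℝ} (hp : p ∈ HP) (he : e.1 ^ 2 + e.2 ^ 2 = 1) :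
    |(p.1 * e.1 + p.2 * e.2) / rr p| ≤ 1 ∧
    |(e.2 * rr p - p.2 * ((p.1 * e.1 + p.2 * e.2) / rr p)) / rr p ^ 2| ≤ 1 / rr p := by
  have hp1 : 0 < p.1 := hp
  have hr := rr_pos hp
  have hsq := rr_sq p
  have key : (p.1 * e.2 - p.2 * e.1) ^ 2 + (p.1 * e.1 + p.2 * e.2) ^ 2 = rr p ^ 2 := by
    rw [hsq, show (p.1 * e.2 - p.2 * e.1) ^ 2 + (p.1 * e.1 + p.2 * e.2) ^ 2 =
      (p.1 ^ 2 + p.2 ^ 2) * (e.1 ^ 2 + e.2 ^ 2) by ring, he, mul_one]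
  constructor
  · rw [abs_div, abs_of_pos hr, div_le_one hr]
    exact abs_le_of_sq_le_sq (by nlinarith [sq_nonneg (p.1 * e.2 - p.2 * e.1)]) hr.le
  · have h1 : (e.2 * rr p - p.2 * ((p.1 * e.1 + p.2 * e.2) / rr p)) / rr p ^ 2 =
        p.1 * (p.1 * e.2 - p.2 * e.1) / rr p ^ 3 := by
      field_simp
      rw [hsq]; ring
    have h2 : |p.1 * e.2 - p.2 * e.1| ≤ rr p :=
      abs_le_of_sq_le_sq (by nlinarith [sq_nonneg (p.1 * e.1 + p.2 * e.2)]) hr.le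
    rw [h1, abs_div, abs_mul, abs_of_pos hp1, abs_of_pos (pow_pos hr 3),
      div_le_div_iff₀ (by positivity) hr]
    calc p.1 * |p.1 * e.2 - p.2 * e.1| * rr p ≤ rr p * rr p * rr p := by
          gcongr; exact fst_le_rr p
      _ = _ := by ring

/-- Since `Q ~ Q + D` at infinity, the logarithmic derivatives of `Q + D` and `Q` are combined first:
their difference is `D' / (Q + D) - D Q' / ((Q + D) Q)`, which decays one power faster. -/
lemma kerr_v_scalar {m r D Q D' Q' : ℝ} (hm : 0 < m) (hr : 0 < r)
    (hQ : (r + m) ^ 2 * r ^ 2 ≤ Q) (hD0 : 0 ≤ D) (hD : D ≤ 4 * m * (r + m) ^ 3)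
    (hP : (r + m) ^ 4 ≤ Q + D) (hD' : |D'| ≤ 8 * m * (r + m) ^ 2)
    (hQ' : |Q'| ≤ 4 * r * (r + m) ^ 2) :
    |(Q' + D') / (Q + D) - Q' / Q| ≤ 24 * m / (r * (r + m)) := by
  have hR : 0 < r + m := by linarith
  have hQ0 : 0 < Q := lt_of_lt_of_le (by positivity) hQ
  have hP0 : 0 < Q + D := by linarith
  have e : (Q' + D') / (Q + D) - Q' / Q = D' / (Q + D) - D * Q' / ((Q + D) * Q) := by
    field_simp; ring
  rw [e]
  have h1 : |D' / (Q + D)| ≤ 8 * m / (r * (r + m)) := by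
    rw [abs_div, abs_of_pos hP0]
    calc |D'| / (Q + D) ≤ 8 * m * (r + m) ^ 2 / (r + m) ^ 4 := by gcongr
      _ = 8 * m / ((r + m) * (r + m)) := by field_simp
      _ ≤ _ := by gcongr; linarith
  have h2 : |D * Q' / ((Q + D) * Q)| ≤ 16 * m / (r * (r + m)) := by
    rw [abs_div, abs_mul, abs_of_nonneg hD0, abs_of_pos (mul_pos hP0 hQ0)]
    calc D * |Q'| / ((Q + D) * Q)
        ≤ (4 * m * (r + m) ^ 3) * (4 * r * (r + m) ^ 2) /
          ((r + m) ^ 4 * ((r + m) ^ 2 * r ^ 2)) := by gcongr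
      _ = _ := by field_simp; ring
  refine (abs_sub _ _).trans ((add_le_add h1 h2).trans (le_of_eq ?_))
  ring

lemma kerrD_le {m : ℝ} (hm : 0 < m) {p : ℝ × ℝ} (hp : p ∈ HP) :
    kerrD m p ≤ 4 * m * (rr p + m) ^ 3 := by
  have hr := rr_pos hp
  have : 0 ≤ 2 * m * rr p ^ 3 + 6 * m ^ 2 * rr p ^ 2 + 4 * m ^ 3 * rr p := by positivity
  unfold kerrD; nlinarith

lemma pow_four_le {m : ℝ} (hm : 0 < m) {p : ℝ × ℝ} (hp : p ∈ HP) :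
    (rr p + m) ^ 4 ≤ kerrQ m p + kerrD m p := by
  have hr := rr_pos hp
  have : 0 ≤ m ^ 2 * rr p ^ 2 + 4 * m ^ 3 * rr p + 3 * m ^ 4 + m ^ 2 * p.2 ^ 2 := by positivity
  unfold kerrQ kerrD; nlinarith

/-- Pointwise bound `|∂v₀| ≤ 24 m / (r (r + m))`, where `m = √|J|`. -/
lemma v0_bound {J : ℝ} (hJ : J ≠ 0) {p e : ℝ × ℝ} (hp : p ∈ HP) (he : e.1 ^ 2 + e.2 ^ 2 = 1) :
    DifferentiableAt ℝ (v0 J) p ∧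
    |fderiv ℝ (v0 J) p e| ≤ 24 * √|J| / (rr p * (rr p + √|J|)) := by
  have hm : 0 < √|J| := Real.sqrt_pos.2 (abs_pos.2 hJ)
  set m := √|J| with hmdef
  have hr := rr_pos hp
  have hQ := kerrQ_pos hm hp
  have hD := kerrD_pos hm hp
  have hev : v0 J =ᶠ[nhds p] fun q => Real.log (kerrQ m q + kerrD m q) - Real.log (kerrQ m q) := by
    filter_upwards [isOpen_HP.mem_nhds hp] with q hq using v0_eq hJ hq
  have hrd := differentiableAt_rr hp
  have hQd : DifferentiableAt ℝ (kerrQ m) p := by unfold kerrQ; fun_prop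
  have hDd : DifferentiableAt ℝ (kerrD m) p := by unfold kerrD; fun_prop
  have hd : DifferentiableAt ℝ
      (fun q => Real.log (kerrQ m q + kerrD m q) - Real.log (kerrQ m q)) p :=
    ((hQd.add hDd).log (by simp only [Pi.add_apply]; positivity)).sub (hQd.log hQ.ne')
  refine ⟨hev.symm.differentiableAt_iff.1 hd, ?_⟩
  set r' := (p.1 * e.1 + p.2 * e.2) / rr p with hr'
  have hr1 : |r'| ≤ 1 := (line_bounds hp he).1
  have hrl : HasDerivAt (fun τ : ℝ => rr (p + τ • e)) r' 0 := hasDerivAt_rr_line hp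
  have hzl : HasDerivAt (fun τ : ℝ => (p + τ • e).2) e.2 0 := by
    simpa using ((hasDerivAt_id (0 : ℝ)).mul_const e.2).const_add p.2
  have hQl : HasDerivAt (fun τ : ℝ => kerrQ m (p + τ • e))
      ((4 * rr p ^ 3 + 6 * m * rr p ^ 2 + 2 * m ^ 2 * rr p) * r' + 2 * m ^ 2 * p.2 * e.2) 0 := by
    have := (((hrl.add_const m).pow 2).mul (hrl.pow 2)).add ((hzl.pow 2).const_mul (m ^ 2))
    refine this.congr_deriv ?_
    simp
    ring
  have hDl : HasDerivAt (fun τ : ℝ => kerrD m (p + τ • e))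
      ((6 * m * rr p ^ 2 + 12 * m ^ 2 * rr p + 8 * m ^ 3) * r') 0 := by
    have := ((((hrl.pow 3).const_mul (2 * m)).add ((hrl.pow 2).const_mul (6 * m ^ 2))).add
      (hrl.const_mul (8 * m ^ 3))).add_const (4 * m ^ 4)
    refine this.congr_deriv ?_
    simp
    ring
  have hz : |p.2| ≤ rr p :=
    abs_le_of_sq_le_sq (by rw [rr_sq]; nlinarith [sq_nonneg p.1]) hr.le
  have he2 : |e.2| ≤ 1 := abs_le_one_iff_mul_self_le_one.2 (by nlinarith [sq_nonneg e.1])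
  have hl := ((hQl.add hDl).log (by simp; positivity)).sub (hQl.log (by simpa using hQ.ne'))
  rw [fderiv_eq_of_line hev hd hl]
  simp only [Pi.add_apply, zero_smul, add_zero]
  refine kerr_v_scalar hm hr ?_ hD.le (kerrD_le hm hp) (pow_four_le hm hp) ?_ ?_
  · unfold kerrQ; nlinarith [mul_nonneg (sq_nonneg m) (sq_nonneg p.2)]
  · rw [abs_mul, abs_of_pos (by positivity)]
    calc _ ≤ (6 * m * rr p ^ 2 + 12 * m ^ 2 * rr p + 8 * m ^ 3) * 1 := by gcongr
      _ ≤ _ := by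
        have : 0 ≤ 2 * m * rr p ^ 2 + 4 * m ^ 2 * rr p := by positivity
        nlinarith
  · refine (abs_add_le _ _).trans ?_
    rw [abs_mul, abs_mul, abs_mul, abs_of_pos (by positivity), abs_of_pos (a := 2 * m ^ 2)
      (by positivity)]
    calc _ ≤ (4 * rr p ^ 3 + 6 * m * rr p ^ 2 + 2 * m ^ 2 * rr p) * 1 +
          2 * m ^ 2 * rr p * 1 := by gcongr
      _ ≤ _ := by
        have : 0 ≤ m * rr p ^ 2 := by positivity
        nlinarith

/-- The left-hand side is the derivative of `2J(u³ - 3u) - 2J² u (1 - u²)² / ((r + m)² + m² u²)`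
when `u`, `r` have derivatives `u'`, `r'`. The factor `1 - u² = sin²θ` that comes out is what
compensates the vanishing of `X₀` on the axis. -/
lemma kerr_Y_scalar {J m r u u' r' : ℝ} (hm : 0 < m) (hJ : |J| = m ^ 2) (hr : 0 < r)
    (hu : u ^ 2 ≤ 1) (hu' : |u'| ≤ 1 / r) (hr' : |r'| ≤ 1) :
    |2 * J * (3 * u ^ 2 - 3) * u' - 2 * J ^ 2 *
      (((u' * (1 - u ^ 2) ^ 2 + u * (2 * (1 - u ^ 2) * (-(2 * u * u')))) *
        ((r + m) ^ 2 + m ^ 2 * u ^ 2) -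
        u * (1 - u ^ 2) ^ 2 * (2 * (r + m) * r' + 2 * m ^ 2 * u * u')) /
        ((r + m) ^ 2 + m ^ 2 * u ^ 2) ^ 2)| ≤ (1 - u ^ 2) * (24 * m ^ 2 / r) := by
  have hR : 0 < r + m := by linarith
  set s := 1 - u ^ 2 with hs
  have hs0 : 0 ≤ s := by linarith
  have hs1 : s ≤ 1 := by nlinarith [sq_nonneg u]
  have hu1 : |u| ≤ 1 := abs_le_one_iff_mul_self_le_one.2 (by nlinarith)
  set S := (r + m) ^ 2 + m ^ 2 * u ^ 2 with hS
  have hSR : (r + m) ^ 2 ≤ S := by nlinarith [mul_nonneg (sq_nonneg m) (sq_nonneg u)]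
  have hS0 : 0 < S := lt_of_lt_of_le (by positivity) hSR
  have hJ2 : J ^ 2 = m ^ 4 := by rw [← sq_abs, hJ]; ring
  have e : 2 * J * (3 * u ^ 2 - 3) * u' - 2 * J ^ 2 *
      (((u' * s ^ 2 + u * (2 * s * (-(2 * u * u')))) * S -
        u * s ^ 2 * (2 * (r + m) * r' + 2 * m ^ 2 * u * u')) / S ^ 2) =
      s * (-(6 * J * u') - 2 * m ^ 4 * ((s - 4 * u ^ 2) * u' / S -
        u * s * (2 * (r + m) * r' + 2 * m ^ 2 * u * u') / S ^ 2)) := by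
    rw [hJ2, show 3 * u ^ 2 - 3 = -3 * s by rw [hs]; ring]
    field_simp
    ring
  rw [e, abs_mul, abs_of_nonneg hs0]
  gcongr
  have h1 : |6 * J * u'| ≤ 6 * m ^ 2 * (1 / r) := by
    rw [abs_mul, abs_mul, hJ, abs_of_pos (by norm_num : (0 : ℝ) < 6)]
    gcongr
  have hmS : m ^ 2 ≤ S := by nlinarith
  have h2 : |(s - 4 * u ^ 2) * u' / S| ≤ 5 * (1 / r) / m ^ 2 := by
    rw [abs_div, abs_mul, abs_of_pos hS0]
    have : |s - 4 * u ^ 2| ≤ 5 := by rw [abs_le]; constructor <;> nlinarith [sq_nonneg u]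
    gcongr
  have h3 : |u * s * (2 * (r + m) * r' + 2 * m ^ 2 * u * u') / S ^ 2| ≤
      4 * (1 / r) / m ^ 2 := by
    rw [abs_div, abs_mul, abs_mul, abs_of_nonneg hs0, abs_of_pos (pow_pos hS0 2)]
    have hb : |2 * (r + m) * r' + 2 * m ^ 2 * u * u'| ≤ 2 * (r + m) * 1 + 2 * m ^ 2 * 1 * (1 / r) := by
      refine (abs_add_le _ _).trans ?_
      rw [abs_mul (2 * (r + m)), abs_mul (2 * m ^ 2 * u), abs_mul (2 * m ^ 2),
        abs_of_pos (a := 2 * (r + m)) (by positivity),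
        abs_of_pos (a := 2 * m ^ 2) (by positivity)]
      gcongr
    have hb2 : 2 * (r + m) * 1 + 2 * m ^ 2 * 1 * (1 / r) ≤ 4 * (r + m) ^ 2 * (1 / r) := by
      rw [← sub_nonneg]
      have : 4 * (r + m) ^ 2 * (1 / r) - (2 * (r + m) * 1 + 2 * m ^ 2 * 1 * (1 / r)) =
        (2 * r ^ 2 + 6 * r * m + 2 * m ^ 2) / r := by field_simp; ring
      rw [this]; positivity
    calc _ ≤ 1 * 1 * (4 * (r + m) ^ 2 * (1 / r)) / (S * S) := by
          have := hb.trans hb2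
          rw [sq S]
          gcongr
      _ ≤ 1 * 1 * (4 * S * (1 / r)) / (S * m ^ 2) := by gcongr
      _ = _ := by field_simp
  have h4 := (abs_sub _ _).trans (add_le_add h2 h3)
  refine (abs_sub _ _).trans ?_
  rw [abs_neg, abs_mul (2 * m ^ 4), abs_of_pos (a := 2 * m ^ 4) (by positivity)]
  calc _ ≤ 6 * m ^ 2 * (1 / r) + 2 * m ^ 4 * (5 * (1 / r) / m ^ 2 + 4 * (1 / r) / m ^ 2) := by
        gcongr
    _ = _ := by field_simp; ring

/-- Pointwise bound `|∂Y₀| ≤ 24 m² sin²θ / r`, where `m = √|J|`. -/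
lemma Y0_bound {J : ℝ} (hJ : J ≠ 0) {p e : ℝ × ℝ} (hp : p ∈ HP) (he : e.1 ^ 2 + e.2 ^ 2 = 1) :
    DifferentiableAt ℝ (Y0 J) p ∧
    |fderiv ℝ (Y0 J) p e| ≤ p.1 ^ 2 / rr p ^ 2 * (24 * √|J| ^ 2 / rr p) := by
  have hm : 0 < √|J| := Real.sqrt_pos.2 (abs_pos.2 hJ)
  have hJm : |J| = √|J| ^ 2 := (Real.sq_sqrt (abs_nonneg J)).symm
  set m := √|J| with hmdef
  have hr := rr_pos hp
  have hs : ∀ q ∈ HP, sin2T q = 1 - cosT q ^ 2 := by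
    intro q hq
    have := rr_pos hq
    have h2 := rr_sq q
    unfold sin2T cosT
    field_simp
    linarith
  have hev : Y0 J =ᶠ[nhds p] fun q => 2 * J * (cosT q ^ 3 - 3 * cosT q) -
      2 * J ^ 2 * (cosT q * (1 - cosT q ^ 2) ^ 2 / ((rr q + m) ^ 2 + m ^ 2 * cosT q ^ 2)) := by
    filter_upwards [isOpen_HP.mem_nhds hp] with q hq
    rw [Y0, hs q hq, Sg, rt, ← hmdef, hJm]
    ring
  have hrd := differentiableAt_rr hp
  have hcd : DifferentiableAt ℝ cosT p := by
    have h0 := hr.ne'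
    unfold cosT; fun_prop (disch := assumption)
  have hS0 : (rr p + m) ^ 2 + m ^ 2 * cosT p ^ 2 ≠ 0 := by positivity
  have hd : DifferentiableAt ℝ (fun q => 2 * J * (cosT q ^ 3 - 3 * cosT q) -
      2 * J ^ 2 * (cosT q * (1 - cosT q ^ 2) ^ 2 /
        ((rr q + m) ^ 2 + m ^ 2 * cosT q ^ 2))) p := by
    fun_prop (disch := assumption)
  refine ⟨hev.symm.differentiableAt_iff.1 hd, ?_⟩
  obtain ⟨hr1, hu1⟩ := line_bounds hp he
  set r' := (p.1 * e.1 + p.2 * e.2) / rr p with hr'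
  set u' := (e.2 * rr p - p.2 * r') / rr p ^ 2 with hu'
  have hrl : HasDerivAt (fun τ : ℝ => rr (p + τ • e)) r' 0 := hasDerivAt_rr_line hp
  have hzl : HasDerivAt (fun τ : ℝ => (p + τ • e).2) e.2 0 := by
    simpa using ((hasDerivAt_id (0 : ℝ)).mul_const e.2).const_add p.2
  have hul : HasDerivAt (fun τ : ℝ => cosT (p + τ • e)) u' 0 := by
    refine (hzl.div hrl (by simpa using hr.ne')).congr_deriv ?_
    simp [hu']
  have hsl : HasDerivAt (fun τ : ℝ => 1 - cosT (p + τ • e) ^ 2) (-(2 * cosT p * u')) 0 := by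
    refine ((hul.pow 2).const_sub 1).congr_deriv ?_
    simp
  have hSl : HasDerivAt (fun τ : ℝ => (rr (p + τ • e) + m) ^ 2 + m ^ 2 * cosT (p + τ • e) ^ 2)
      (2 * (rr p + m) * r' + 2 * m ^ 2 * cosT p * u') 0 := by
    refine (((hrl.add_const m).pow 2).add ((hul.pow 2).const_mul (m ^ 2))).congr_deriv ?_
    simp
    ring
  have hnl : HasDerivAt (fun τ : ℝ => cosT (p + τ • e) * (1 - cosT (p + τ • e) ^ 2) ^ 2)
      (u' * (1 - cosT p ^ 2) ^ 2 +
        cosT p * (2 * (1 - cosT p ^ 2) * (-(2 * cosT p * u')))) 0 := by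
    refine (hul.mul (hsl.pow 2)).congr_deriv ?_
    simp
  have hyl : HasDerivAt (fun τ : ℝ => 2 * J * (cosT (p + τ • e) ^ 3 - 3 * cosT (p + τ • e)))
      (2 * J * (3 * cosT p ^ 2 - 3) * u') 0 := by
    refine (((hul.pow 3).sub (hul.const_mul 3)).const_mul (2 * J)).congr_deriv ?_
    simp
    ring
  have hl := hyl.sub ((hnl.div hSl (by simpa using hS0)).const_mul (2 * J ^ 2))
  rw [fderiv_eq_of_line hev hd hl]
  simp only [zero_smul, add_zero]
  have hc1 : cosT p ^ 2 ≤ 1 := by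
    have := hs p hp
    have h0 : 0 ≤ sin2T p := by unfold sin2T; positivity
    linarith
  have := kerr_Y_scalar (J := J) hm hJm hr hc1 hu1 hr1
  rw [← hs p hp] at this ⊢
  exact this

/-! ### Integrability of the four energy densities -/

lemma measurable_gradSq (f : ℝ × ℝ → ℝ) : Measurable (gradSq f) := by
  have hmR : Measurable (pdR f) := measurable_fderiv_apply_const ℝ f _
  have hmZ : Measurable (pdZ f) := measurable_fderiv_apply_const ℝ f _
  unfold gradSq
  fun_prop

lemma measurable_v0 (J : ℝ) : Measurable (v0 J) := by
  unfold v0 X0 Sg rt cosT sin2T rr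
  fun_prop

/-- A gradient bound `k x / (r (r + m))` makes `ρ x⁻² |∂f|²` at most a multiple of the kernel of
`integrable_polar_kernel`. -/
lemma rho_sq_le {m r ρ g x : ℝ} (hρ : 0 < ρ) (hρr : ρ ≤ r) (hm : 0 < m) {a b k : ℝ}
    (hg : g = a ^ 2 + b ^ 2) (hx : 0 < x) (ha : |a| ≤ x * (k / (r * (r + m))))
    (hb : |b| ≤ x * (k / (r * (r + m)))) :
    ρ * (x ^ 2)⁻¹ * g ≤ 2 * k ^ 2 * (r * (r + m) ^ 2)⁻¹ := by
  have hr : 0 < r := by linarith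
  have h0 : 0 ≤ x * (k / (r * (r + m))) := (abs_nonneg _).trans ha
  have h1 : g ≤ 2 * (x * (k / (r * (r + m)))) ^ 2 := by
    have := sq_le_sq' (abs_le.1 ha).1 (abs_le.1 ha).2
    have := sq_le_sq' (abs_le.1 hb).1 (abs_le.1 hb).2
    linarith
  calc ρ * (x ^ 2)⁻¹ * g ≤ r * (x ^ 2)⁻¹ * (2 * (x * (k / (r * (r + m)))) ^ 2) := by
        have : 0 ≤ g := by rw [hg]; positivity
        gcongr
    _ = _ := by field_simp

lemma integrable_gradSq_v0 {J : ℝ} (hJ : J ≠ 0) :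
    IntegrableOn (fun p => p.1 * gradSq (v0 J) p) HP := by
  have hm : 0 < √|J| := Real.sqrt_pos.2 (abs_pos.2 hJ)
  refine ((integrable_polar_kernel hm).integrableOn.const_mul
    (2 * (24 * √|J|) ^ 2)).mono' ?_ ?_
  · have := measurable_gradSq (v0 J)
    exact Measurable.aestronglyMeasurable (by fun_prop)
  refine (ae_restrict_iff' measurableSet_HP).2 (ae_of_all _ fun p hp => ?_)
  have hp1 : 0 < p.1 := hp
  have hG : 0 ≤ gradSq (v0 J) p := by unfold gradSq; positivity
  rw [Real.norm_of_nonneg (by positivity)]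
  have := rho_sq_le (x := 1) hp1 (fst_le_rr p) hm (g := gradSq (v0 J) p) rfl one_pos
    (by rw [one_mul]; exact (v0_bound hJ (e := (1, 0)) hp (by norm_num)).2)
    (by rw [one_mul]; exact (v0_bound hJ (e := (0, 1)) hp (by norm_num)).2)
  simpa using this

lemma weight_eq {J : ℝ} (hJ : J ≠ 0) {p : ℝ × ℝ} (hp : p ∈ HP) :
    (p.1 ^ 4)⁻¹ * Real.exp (-2 * v0 J p) = (X0 J p ^ 2)⁻¹ := by
  rw [← exp_v0 hJ hp, mul_pow, mul_inv, ← Real.exp_nat_mul, ← Real.exp_neg]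
  push_cast
  ring_nf

/-- `|∂Y₀| / X₀` obeys the same bound as `|∂v₀|`, up to a constant: the factor `sin²θ` in
`Y0_bound` is absorbed by `X₀ ≥ ρ² (r + m)² / (2 r²)`. -/
lemma Y0_bound' {J : ℝ} (hJ : J ≠ 0) {p e : ℝ × ℝ} (hp : p ∈ HP) (he : e.1 ^ 2 + e.2 ^ 2 = 1) :
    |fderiv ℝ (Y0 J) p e| ≤ X0 J p * (48 * √|J| / (rr p * (rr p + √|J|))) := by
  have hm : 0 < √|J| := Real.sqrt_pos.2 (abs_pos.2 hJ)
  refine (Y0_bound hJ hp he).2.trans ?_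
  set m := √|J|
  have hr := rr_pos hp
  have hp1 : 0 < p.1 := hp
  have hQ := kerrQ_pos hm hp
  have hP := pow_four_le hm hp
  have hQle : kerrQ m p ≤ 2 * rr p ^ 2 * (rr p + m) ^ 2 := by
    have h1 : p.2 ^ 2 ≤ rr p ^ 2 := by rw [rr_sq]; nlinarith
    have h2 : m ^ 2 ≤ (rr p + m) ^ 2 := by gcongr; linarith
    have h3 := mul_le_mul h2 h1 (sq_nonneg _) (sq_nonneg _)
    unfold kerrQ; nlinarith
  have hX : p.1 ^ 2 * ((rr p + m) ^ 4 / (2 * rr p ^ 2 * (rr p + m) ^ 2)) ≤ X0 J p := by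
    have hD := kerrD_pos hm hp
    rw [X0_eq hJ hp]
    change _ ≤ p.1 ^ 2 * ((kerrQ m p + kerrD m p) / kerrQ m p)
    gcongr
  refine le_trans ?_ (mul_le_mul_of_nonneg_right hX (by positivity))
  have e1 : p.1 ^ 2 * ((rr p + m) ^ 4 / (2 * rr p ^ 2 * (rr p + m) ^ 2)) *
      (48 * m / (rr p * (rr p + m))) = p.1 ^ 2 / rr p ^ 2 * (24 * (m * (rr p + m)) / rr p) := by
    field_simp
    ring
  rw [e1]
  gcongr
  nlinarith

lemma integrable_gradSq_Y0 {J : ℝ} (hJ : J ≠ 0) :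
    IntegrableOn (fun p => p.1 * ((p.1 ^ 4)⁻¹ * Real.exp (-2 * v0 J p)) * gradSq (Y0 J) p) HP := by
  have hm : 0 < √|J| := Real.sqrt_pos.2 (abs_pos.2 hJ)
  refine ((integrable_polar_kernel hm).integrableOn.const_mul
    (2 * (48 * √|J|) ^ 2)).mono' ?_ ?_
  · have := measurable_gradSq (Y0 J)
    have := measurable_v0 J
    exact Measurable.aestronglyMeasurable (by fun_prop)
  refine (ae_restrict_iff' measurableSet_HP).2 (ae_of_all _ fun p hp => ?_)
  have hp1 : 0 < p.1 := hp
  have hG : 0 ≤ gradSq (Y0 J) p := by unfold gradSq; positivity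
  rw [Real.norm_of_nonneg (by positivity), weight_eq hJ hp]
  exact rho_sq_le hp1 (fst_le_rr p) hm rfl (X0_pos hJ hp)
    (Y0_bound' hJ (e := (1, 0)) hp (by norm_num)) (Y0_bound' hJ (e := (0, 1)) hp (by norm_num))

/-- On the boundary `ρ = ρ₀` the derivative vanishes as a limit from inside the cylinder. -/
lemma Bsp.fderiv_y_eq_zero {ρ₀ β : ℝ} (φ : Bsp ρ₀ β) {p : ℝ × ℝ} (hp : p.1 ≤ ρ₀) :
    fderiv ℝ φ.y p = 0 := by
  have hc : Continuous (fun τ : ℝ => fderiv ℝ φ.y (p - τ • ((1, 0) : ℝ × ℝ))) :=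
    (φ.hy.continuous_fderiv (by norm_num)).comp (by fun_prop)
  have h1 : Filter.Tendsto (fun τ : ℝ => fderiv ℝ φ.y (p - τ • ((1, 0) : ℝ × ℝ)))
      (nhdsWithin 0 (Set.Ioi 0)) (nhds (fderiv ℝ φ.y p)) := by
    have := (hc.tendsto 0).mono_left (nhdsWithin_le_nhds (s := Set.Ioi 0))
    simpa using this
  refine tendsto_nhds_unique h1 (tendsto_const_nhds.congr' ?_)
  filter_upwards [self_mem_nhdsWithin] with τ hτ
  have hτ0 : 0 < τ := hτ
  have hev : φ.y =ᶠ[nhds (p - τ • ((1, 0) : ℝ × ℝ))] fun _ => 0 := by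
    have : IsOpen {q : ℝ × ℝ | q.1 < ρ₀} := isOpen_lt continuous_fst continuous_const
    filter_upwards [this.mem_nhds (by simp; linarith)] with q hq using φ.hy0 q (le_of_lt hq)
  rw [hev.fderiv_eq]
  simp

lemma integrable_gradSq_y {ρ₀ β : ℝ} (hβ : β < -(1 / 2)) (φ : Bsp ρ₀ β) :
    IntegrableOn (fun p => p.1 * gradSq φ.y p) HP := by
  obtain ⟨C, hC⟩ := φ.hby
  refine integrable_rho_gradSq hβ (C := max C 0) fun p _ => ?_
  by_cases h : ρ₀ < p.1
  · exact le_max_of_le_left (hC ⟨p, h, rfl⟩)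
  · push Not at h
    apply le_max_of_le_right
    simp [wFn, gradSq, pdR, pdZ, φ.hy0 p h, φ.fderiv_y_eq_zero h]

/-- The weight `ρ⁻⁴ e^{-2v₀}` is at most `ρ₀⁻⁴` on the set where `∂y ≠ 0`. -/
lemma integrable_weight_gradSq_y {J ρ₀ β : ℝ} (hJ : J ≠ 0) (hρ₀ : 0 < ρ₀) (hβ : β < -(1 / 2))
    (φ : Bsp ρ₀ β) :
    IntegrableOn (fun p => p.1 * ((p.1 ^ 4)⁻¹ * Real.exp (-2 * v0 J p)) * gradSq φ.y p) HP := by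
  refine ((integrable_gradSq_y hβ φ).const_mul (ρ₀ ^ 4)⁻¹).mono' ?_ ?_
  · have := measurable_gradSq φ.y
    have := measurable_v0 J
    exact Measurable.aestronglyMeasurable (by fun_prop)
  refine (ae_restrict_iff' measurableSet_HP).2 (ae_of_all _ fun p hp => ?_)
  have hp1 : 0 < p.1 := hp
  have hG : 0 ≤ gradSq φ.y p := by unfold gradSq; positivity
  rw [Real.norm_of_nonneg (by positivity)]
  by_cases h : ρ₀ < p.1
  · have he : Real.exp (-2 * v0 J p) ≤ 1 :=
      Real.exp_le_one_iff.2 (by have := v0_nonneg hJ hp; linarith)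
    calc _ ≤ p.1 * ((ρ₀ ^ 4)⁻¹ * 1) * gradSq φ.y p := by gcongr
      _ = _ := by ring
  · push Not at h
    simp [gradSq, pdR, pdZ, φ.fderiv_y_eq_zero h]

lemma Bsp.abs_a_le {ρ₀ β : ℝ} (hβ : β < -(1 / 2)) (φ : Bsp ρ₀ β) {C : ℝ}
    (hC : ∀ p ∈ HP, wFn β φ.a p ≤ C) {p : ℝ × ℝ} (hp : p ∈ HP) : |φ.a p| ≤ C := by
  have hs1 : 1 ≤ sgm p := by
    rw [sgm]; apply Real.one_le_sqrt.2; nlinarith [sq_nonneg (rr p)]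
  refine le_trans ?_ (hC p hp)
  have h1 : 1 ≤ sgm p ^ (-β) := Real.one_le_rpow hs1 (by linarith)
  have h2 : 0 ≤ sgm p ^ (-β + 1) * Real.sqrt (gradSq φ.a p) := by positivity
  unfold wFn
  nlinarith [abs_nonneg (φ.a p)]

lemma fderiv_add_smul {f g : ℝ × ℝ → ℝ} {p : ℝ × ℝ} (hf : DifferentiableAt ℝ f p)
    (hg : DifferentiableAt ℝ g p) (s : ℝ) (e : ℝ × ℝ) :
    fderiv ℝ (fun q => f q + s * g q) p e = fderiv ℝ f p e + s * fderiv ℝ g p e := by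
  rw [fderiv_fun_add hf (hg.const_mul s), fderiv_const_mul hg]
  simp

/-! ### The first derivative of the mass functional -/

/-- For every φ = (α, y) ∈ 𝓑 and every t ∈ ℝ, i_φ is differentiable at t and
i'_φ(t) = (1/(16π)) ∫_{ℝ³} { ∂v(t)·∂α + (∂Y(t)·∂y − α |∂Y(t)|²) X(t)⁻² } dμ,
where v(t) = v₀ + tα, Y(t) = Y₀ + ty and X(t) = ρ² e^{v(t)}. -/
theorem iF_first_derivative (J ρ₀ β : ℝ) (hJ : J ≠ 0) (hρ₀ : 0 < ρ₀) (hβ : β < -(1 / 2))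
    (φ : Bsp ρ₀ β) (t : ℝ) :
    HasDerivAt (iF J ρ₀ β φ)
      ((1 / (16 * π)) * intR3 (fun p =>
        gradDot (fun q => v0 J q + t * φ.a q) φ.a p +
          (gradDot (fun q => Y0 J q + t * φ.y q) φ.y p -
              φ.a p * gradSq (fun q => Y0 J q + t * φ.y q) p) *
            ((p.1 ^ 2 * Real.exp (v0 J p + t * φ.a p)) ^ 2)⁻¹)) t := by
  obtain ⟨A, hA⟩ := φ.hba
  have hA' : ∀ p ∈ HP, wFn β φ.a p ≤ A := fun p hp => hA ⟨p, hp, rfl⟩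
  have hmR : ∀ f, Measurable (pdR f) := fun f => measurable_fderiv_apply_const ℝ f _
  have hmZ : ∀ f, Measurable (pdZ f) := fun f => measurable_fderiv_apply_const ℝ f _
  have hv0 := measurable_v0 J
  have hae : ∀ P : ℝ × ℝ → Prop, (∀ p ∈ HP, P p) → ∀ᵐ p ∂(volume.restrict HP), P p :=
    fun P h => (ae_restrict_iff' measurableSet_HP).2 (ae_of_all _ h)
  have key := hasDerivAt_energy (μ := volume.restrict HP) (α := φ.a) (W := fun p => p.1)
    (V := fun p => p.1 * ((p.1 ^ 4)⁻¹ * Real.exp (-2 * v0 J p)))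
    (hmR (v0 J)) (hmR φ.a) (hmZ (v0 J)) (hmZ φ.a) (hmR (Y0 J)) (hmR φ.y) (hmZ (Y0 J)) (hmZ φ.y)
    φ.ha.continuous.measurable measurable_fst (by fun_prop)
    (hae _ fun p hp => φ.abs_a_le hβ hA' hp) (hae _ fun p hp => le_of_lt hp)
    (hae _ fun p hp => by have hp1 : 0 < p.1 := hp; positivity)
    (integrable_gradSq_v0 hJ) (integrable_rho_gradSq hβ hA') (integrable_gradSq_Y0 hJ)
    (integrable_weight_gradSq_y hJ hρ₀ hβ φ) t
  have hsplit : ∀ p ∈ HP, ∀ s : ℝ, ∀ e : ℝ × ℝ,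
      fderiv ℝ (fun q => v0 J q + s * φ.a q) p e = fderiv ℝ (v0 J) p e + s * fderiv ℝ φ.a p e ∧
      fderiv ℝ (fun q => Y0 J q + s * φ.y q) p e = fderiv ℝ (Y0 J) p e + s * fderiv ℝ φ.y p e :=
    fun p hp s e =>
      ⟨fderiv_add_smul (v0_bound hJ (e := (1, 0)) hp (by norm_num)).1
        (φ.ha.differentiable (by norm_num) p) s e,
       fderiv_add_smul (Y0_bound hJ (e := (1, 0)) hp (by norm_num)).1
        (φ.hy.differentiable (by norm_num) p) s e⟩
  have hpi : (π : ℝ) ≠ 0 := Real.pi_ne_zero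
  have hF : iF J ρ₀ β φ = fun s => (1 / 16 : ℝ) * ∫ p in HP,
      (p.1 * ((pdR (v0 J) p + s * pdR φ.a p) ^ 2 + (pdZ (v0 J) p + s * pdZ φ.a p) ^ 2) +
        p.1 * ((p.1 ^ 4)⁻¹ * Real.exp (-2 * v0 J p)) * Real.exp (-2 * (s * φ.a p)) *
          ((pdR (Y0 J) p + s * pdR φ.y p) ^ 2 + (pdZ (Y0 J) p + s * pdZ φ.y p) ^ 2)) := by
    funext s
    rw [iF, MF, intR3, ← mul_assoc]
    congr 1
    · field_simp; norm_num
    · refine setIntegral_congr_fun measurableSet_HP fun p hp => ?_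
      simp only [gradSq, pdR, pdZ, hsplit p hp s]
      rw [show -2 * (v0 J p + s * φ.a p) = -2 * v0 J p + -2 * (s * φ.a p) by ring, Real.exp_add]
      ring
  rw [hF]
  refine (key.const_mul (1 / 16)).congr_deriv ?_
  rw [intR3, ← mul_assoc, show 1 / (16 * π) * (2 * π) = 1 / 16 * 2 by field_simp, mul_assoc,
    ← integral_const_mul 2]
  congr 1
  refine setIntegral_congr_fun measurableSet_HP fun p hp => ?_
  have hX : ((p.1 ^ 2 * Real.exp (v0 J p + t * φ.a p)) ^ 2)⁻¹ =
      (p.1 ^ 4)⁻¹ * Real.exp (-2 * v0 J p) * Real.exp (-2 * (t * φ.a p)) := by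
    rw [mul_pow, mul_inv, ← Real.exp_nat_mul, ← Real.exp_neg, mul_assoc, ← Real.exp_add]
    push_cast
    ring_nf
  simp only [gradSq, gradDot, pdR, pdZ, hsplit p hp t, hX]
  ring
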